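/- Write $\overline{\mathbb R}=[-\infty,\infty]$, with the conventions $0\cdot\infty=0$ and $\infty+(-\infty)=(-\infty)+\infty=\infty$. An *outer probability content* on a set $Y$ is a functional $\mathcal E$ assigning to every function $f:Y\to\overline{\mathbb R}$ a value $\mathcal E(f)\in\overline{\mathbb R}$ such that (1) $\mathcal E(f)\le\mathcal E(g)$ whenever $f\le g$ pointwise; (2) $\mathcal E(cf)=c\,\mathcal E(f)$ for every real $c>0$; (3) $\mathcal E(f+g)\le\mathcal E(f)+\mathcal E(g)$; (4) $\mathcal E(c)=c$ for every real constant function $c$. Let $X$ be a nonempty set and let $\mathcal E_1,\mathcal E_2,\dots$ be outer probability contents on $X$. Let $\Omega=X^\infty$ be the set of infinite sequences of elements of $X$, let $X^*$ be the set of finite sequences (*situations*), for $s\in X^*$ let $\Gamma(s)\subseteq\Omega$ be the set of infinite sequences extending $s$, and let $\omega^n$ be the prefix of length $n$ of $\omega\in\Omega$. A *supermartingale* is a function $S:X^*\to\overline{\mathbb R}$ such that $\mathcal E_n(x\mapsto S(sx))\le S(s)$ for every $n\ge1$ and every situation $s$ of length $n-1$; it is *bounded below* if there is a real $C$ with $S\ge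 C$ everywhere. For $\xi:\Omega\to\overline{\mathbb R}$ and a situation $s$ put $$\overline{\mathbb E}(\xi\mid s):=\inf\Bigl\{S(s)\;:\;S\text{ a bounded below supermartingale with }\liminf_{n\to\infty}S(\omega^n)\ge\xi(\omega)\text{ for all }\omega\in\Gamma(s)\Bigr\}.$$ Then, for every situation $s$, the functional $\xi\mapsto\overline{\mathbb E}(\xi\mid s)$, defined on all functions $\xi:\Omega\to\overline{\mathbb R}$, is an outer probability content on $\Omega$; that is, it is monotone ($\overline{\mathbb E}(\xi\mid s)\le\overline{\mathbb E}(\eta\mid s)$ whenever $\xi\le\eta$ pointwise), positively homogeneous ($\overline{\mathbb E}(c\xi\mid s)=c\,\overline{\mathbb E}(\xi\mid s)$ for every real $c>0$), subadditive ($\overline{\mathbb E}(\xi+\eta\mid s)\le\overline{\mathbb E}(\xi\mid s)+\overline{\mathbb E}(\eta\mid s)$), and satisfies $\overline{\mathbb E}(c\mid s)=c$ for every real constant function $c$. -/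

import Mathlib

open Filter Topology

namespace GTP

noncomputable section

/-- Addition on `[-∞, ∞]` with the convention `∞ + (-∞) = (-∞) + ∞ = ∞`
(Mathlib's `+` on `EReal` has `⊤ + ⊥ = ⊥` instead, and agrees with this one otherwise). -/
def upAdd (a b : EReal) : EReal := if a = ⊤ ∨ b = ⊤ then ⊤ else a + b

/-- An *outer probability content* on a type `Y`: a functional on all
`EReal`-valued functions that is monotone, positively homogeneous,
subadditive (for `upAdd`), and maps real constants to themselves. -/
def IsOPC {Y : Type*} (E : (Y → EReal) → EReal) : Prop :=
  (∀ f g : Y → EReal, (∀ y, f y ≤ g y) → E f ≤ E g) ∧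
  (∀ c : ℝ, 0 < c → ∀ f : Y → EReal,
    E (fun y => (c : EReal) * f y) = (c : EReal) * E f) ∧
  (∀ f g : Y → EReal, E (fun y => upAdd (f y) (g y)) ≤ upAdd (E f) (E g)) ∧
  (∀ c : ℝ, E (fun _ => (c : EReal)) = (c : EReal))

/-- The length-`n` prefix `ω^n` of a sequence `ω ∈ Ω = X^∞`. -/
def pre {X : Type*} (ω : ℕ → X) (n : ℕ) : List X := List.ofFn fun i : Fin n => ω i

/-- `Γ(s)`: the set of infinite extensions of the situation `s`. -/
def Gamma {X : Type*} (s : List X) : Set (ℕ → X) := {ω | pre ω s.length = s}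

/-- A *supermartingale* with respect to the outer probability contents
`E_1, E_2, …`, indexed here from zero: `E n` stands for `E_{n+1}` and
governs the trial played in situations of length `n`. -/
def IsSupermartingale {X : Type*} (E : ℕ → (X → EReal) → EReal) (S : List X → EReal) : Prop :=
  ∀ s : List X, E s.length (fun x => S (s ++ [x])) ≤ S s

/-- A function to `EReal` bounded below by a real constant. -/
def BddBelowFn {Y : Type*} (S : Y → EReal) : Prop := ∃ c : ℝ, ∀ t, (c : EReal) ≤ S t

/-- The conditional upper expectation `Ē(ξ | s)`. -/
def upExp {X : Type*} (E : ℕ → (X → EReal) → EReal) (ξ : (ℕ → X) → EReal) (s : List X) : EReal :=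
  sInf {a | ∃ S : List X → EReal, IsSupermartingale E S ∧ BddBelowFn S ∧
    (∀ ω ∈ Gamma s, ξ ω ≤ liminf (fun n => S (pre ω n)) atTop) ∧ S s = a}

end

end GTP

namespace GTP

variable {X : Type*} {E : ℕ → (X → EReal) → EReal}

theorem upAdd_mono {a b c d : EReal} (hac : a ≤ c) (hbd : b ≤ d) : upAdd a b ≤ upAdd c d := by
  by_cases h : c = ⊤ ∨ d = ⊤
  · simp [upAdd, h]
  · have h' : ¬(a = ⊤ ∨ b = ⊤) := by
      rintro (rfl | rfl)
      · exact h (.inl (top_le_iff.1 hac))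
      · exact h (.inr (top_le_iff.1 hbd))
    simpa [upAdd, h, h'] using add_le_add hac hbd

theorem upAdd_eq_add {a b : EReal} (ha : a ≠ ⊥) (hb : b ≠ ⊥) : upAdd a b = a + b := by
  unfold upAdd
  split_ifs with h
  · rcases h with rfl | rfl
    · rw [EReal.top_add_of_ne_bot hb]
    · rw [EReal.add_top_of_ne_bot ha]
  · rfl

theorem BddBelowFn.ne_bot {Y : Type*} {S : Y → EReal} (h : BddBelowFn S) (t : Y) : S t ≠ ⊥ := by
  obtain ⟨c, hc⟩ := h
  exact ((EReal.bot_lt_coe c).trans_le (hc t)).ne'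

theorem BddBelowFn.liminf_ne_bot {Y : Type*} {S : Y → EReal} (h : BddBelowFn S) (u : ℕ → Y) :
    liminf (fun n => S (u n)) atTop ≠ ⊥ := by
  obtain ⟨c, hc⟩ := h
  have : (c : EReal) ≤ liminf (fun n => S (u n)) atTop :=
    le_liminf_of_le (by isBoundedDefault) (Eventually.of_forall fun n => hc _)
  exact ((EReal.bot_lt_coe c).trans_le this).ne'

theorem BddBelowFn.add {Y : Type*} {S T : Y → EReal} (hS : BddBelowFn S) (hT : BddBelowFn T) :
    BddBelowFn fun t => S t + T t := by
  obtain ⟨c, hc⟩ := hS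
  obtain ⟨d, hd⟩ := hT
  exact ⟨c + d, fun t => by rw [EReal.coe_add]; exact add_le_add (hc t) (hd t)⟩

theorem BddBelowFn.const_mul {Y : Type*} {S : Y → EReal} (hS : BddBelowFn S) {c : ℝ}
    (hc : 0 < c) : BddBelowFn fun t => (c : EReal) * S t := by
  obtain ⟨d, hd⟩ := hS
  exact ⟨c * d, fun t => by
    rw [EReal.coe_mul]
    exact mul_le_mul_of_nonneg_left (hd t) (EReal.coe_nonneg.2 hc.le)⟩

theorem IsSupermartingale.add (hE : ∀ n, IsOPC (E n)) {S T : List X → EReal}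
    (hS : IsSupermartingale E S) (hT : IsSupermartingale E T)
    (hSb : BddBelowFn S) (hTb : BddBelowFn T) : IsSupermartingale E fun t => S t + T t := by
  intro t
  simp only [← upAdd_eq_add (hSb.ne_bot _) (hTb.ne_bot _)]
  exact ((hE _).2.2.1 _ _).trans (upAdd_mono (hS t) (hT t))

theorem IsSupermartingale.const_mul (hE : ∀ n, IsOPC (E n)) {S : List X → EReal}
    (hS : IsSupermartingale E S) {c : ℝ} (hc : 0 < c) :
    IsSupermartingale E fun t => (c : EReal) * S t := by
  intro t
  rw [(hE _).2.1 c hc]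
  exact mul_le_mul_of_nonneg_left (hS t) (EReal.coe_nonneg.2 hc.le)

/-- A strategy `g` for choosing the next element can be followed from `s` on forever. -/
theorem exists_path (g : List X → X) (s : List X) :
    ∃ ω ∈ Gamma s, ∀ n, s.length ≤ n → pre ω (n + 1) = pre ω n ++ [g (pre ω n)] := by
  set L : ℕ → List X := fun n => (fun t => t ++ [g t])^[n] s with hL
  have hL_succ (n : ℕ) : L (n + 1) = L n ++ [g (L n)] := by
    simp only [hL, Function.iterate_succ_apply']
  set ω : ℕ → X := fun i => if h : i < s.length then s[i] else g (L (i - s.length)) with hω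
  have hpre (n : ℕ) : pre ω (n + 1) = pre ω n ++ [ω n] :=
    List.ofFn_succ_last
  have hpre_add (n : ℕ) : pre ω (s.length + n) = L n := by
    induction n with
    | zero =>
      apply List.ext_getElem
      · simp [pre, hL]
      · intro i h₁ h₂
        simp [pre, hL, hω]
    | succ n ih =>
      rw [← add_assoc, hpre, ih, hL_succ]
      simp [hω]
  refine ⟨ω, hpre_add 0, fun n hn => ?_⟩
  obtain ⟨k, rfl⟩ := Nat.exists_eq_add_of_le hn
  rw [add_assoc, hpre_add, hpre_add, hL_succ]

/-- A supermartingale that is below `r` in a situation stays below `r` along some path. -/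
theorem IsSupermartingale.exists_path_lt [Nonempty X] (hE : ∀ n, IsOPC (E n))
    {S : List X → EReal} (hS : IsSupermartingale E S) {s : List X} {r : ℝ} (hr : S s < r) :
    ∃ ω ∈ Gamma s, ∀ n, s.length ≤ n → S (pre ω n) < r := by
  have hstep (t : List X) : ∃ x, S t < r → S (t ++ [x]) < r := by
    by_contra! h
    have hx : ∀ x, (r : EReal) ≤ S (t ++ [x]) := fun x => (h x).2
    have hlt : S t < r := (h (Classical.arbitrary X)).1
    have := (hE t.length).1 _ _ hx
    rw [(hE _).2.2.2] at this
    exact (this.trans (hS t)).not_gt hlt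
  choose g hg using hstep
  obtain ⟨ω, hω, hstep⟩ := exists_path g s
  refine ⟨ω, hω, fun n hn => ?_⟩
  induction n, hn using Nat.le_induction with
  | base => rwa [show pre ω s.length = s from hω]
  | succ n hn ih => rw [hstep n hn]; exact hg _ ih

theorem upExp_le {ξ : (ℕ → X) → EReal} {s : List X} {S : List X → EReal}
    (hS : IsSupermartingale E S) (hSb : BddBelowFn S)
    (h : ∀ ω ∈ Gamma s, ξ ω ≤ liminf (fun n => S (pre ω n)) atTop) : upExp E ξ s ≤ S s :=
  sInf_le ⟨S, hS, hSb, h, rfl⟩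

theorem upExp_mono {ξ η : (ℕ → X) → EReal} (h : ∀ ω, ξ ω ≤ η ω) (s : List X) :
    upExp E ξ s ≤ upExp E η s := by
  refine le_sInf ?_
  rintro _ ⟨S, hS, hSb, hη, rfl⟩
  exact upExp_le hS hSb fun ω hω => (h ω).trans (hη ω hω)

theorem upExp_const_mul_le (hE : ∀ n, IsOPC (E n)) {c : ℝ} (hc : 0 < c)
    (ξ : (ℕ → X) → EReal) (s : List X) :
    upExp E (fun ω => (c : EReal) * ξ ω) s ≤ (c : EReal) * upExp E ξ s := by
  have hc' : (0 : EReal) < c := EReal.coe_pos.2 hc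
  rw [← EReal.div_le_iff_le_mul hc' (EReal.coe_ne_top c)]
  refine le_sInf ?_
  rintro _ ⟨S, hS, hSb, hξ, rfl⟩
  rw [EReal.div_le_iff_le_mul hc' (EReal.coe_ne_top c)]
  refine upExp_le (hS.const_mul hE hc) (hSb.const_mul hc) fun ω hω => ?_
  rw [EReal.liminf_const_mul_of_nonneg_of_ne_top hc'.le (EReal.coe_ne_top c)]
  exact mul_le_mul_of_nonneg_left (hξ ω hω) hc'.le

theorem upExp_const_mul (hE : ∀ n, IsOPC (E n)) {c : ℝ} (hc : 0 < c)
    (ξ : (ℕ → X) → EReal) (s : List X) :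
    upExp E (fun ω => (c : EReal) * ξ ω) s = (c : EReal) * upExp E ξ s := by
  refine (upExp_const_mul_le hE hc ξ s).antisymm ?_
  have h := upExp_const_mul_le hE (inv_pos.2 hc) (fun ω => (c : EReal) * ξ ω) s
  simp only [← mul_assoc, ← EReal.coe_mul, inv_mul_cancel₀ hc.ne', EReal.coe_one, one_mul] at h
  calc (c : EReal) * upExp E ξ s
      ≤ c * ((c⁻¹ : ℝ) * upExp E (fun ω => (c : EReal) * ξ ω) s) :=
        mul_le_mul_of_nonneg_left h (EReal.coe_nonneg.2 hc.le)
    _ = upExp E (fun ω => (c : EReal) * ξ ω) s := by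
        rw [← mul_assoc, ← EReal.coe_mul, mul_inv_cancel₀ hc.ne', EReal.coe_one, one_mul]

theorem upExp_upAdd_le (hE : ∀ n, IsOPC (E n)) (ξ η : (ℕ → X) → EReal) (s : List X) :
    upExp E (fun ω => upAdd (ξ ω) (η ω)) s ≤ upAdd (upExp E ξ s) (upExp E η s) := by
  by_cases htop : upExp E ξ s = ⊤ ∨ upExp E η s = ⊤
  · simp [upAdd, htop]
  rw [upAdd, if_neg htop]
  push Not at htop
  refine EReal.le_add_of_forall_gt (.inr htop.2) (.inl htop.1) fun a ha b hb => ?_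
  obtain ⟨_, ⟨S, hS, hSb, hξ, rfl⟩, hSa⟩ := sInf_lt_iff.1 ha
  obtain ⟨_, ⟨T, hT, hTb, hη, rfl⟩, hTb'⟩ := sInf_lt_iff.1 hb
  refine (upExp_le (hS.add hE hT hSb hTb) (hSb.add hTb) fun ω hω => ?_).trans
    (add_le_add hSa.le hTb'.le)
  calc upAdd (ξ ω) (η ω)
      ≤ upAdd (liminf (fun n => S (pre ω n)) atTop) (liminf (fun n => T (pre ω n)) atTop) :=
        upAdd_mono (hξ ω hω) (hη ω hω)
    _ = liminf (fun n => S (pre ω n)) atTop + liminf (fun n => T (pre ω n)) atTop :=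
        upAdd_eq_add (hSb.liminf_ne_bot _) (hTb.liminf_ne_bot _)
    _ ≤ liminf (fun n => S (pre ω n) + T (pre ω n)) atTop := EReal.le_liminf_add

theorem upExp_const [Nonempty X] (hE : ∀ n, IsOPC (E n)) (c : ℝ) (s : List X) :
    upExp E (fun _ => (c : EReal)) s = c := by
  apply le_antisymm
  · exact upExp_le (S := fun _ => (c : EReal)) (fun t => ((hE _).2.2.2 c).le)
      ⟨c, fun _ => le_rfl⟩ fun ω _ => by simp
  · refine le_sInf ?_
    rintro _ ⟨S, hS, -, hc, rfl⟩
    by_contra! hlt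
    obtain ⟨r, hSr, hrc⟩ := EReal.lt_iff_exists_real_btwn.1 hlt
    obtain ⟨ω, hω, hr⟩ := hS.exists_path_lt hE hSr
    have hle : liminf (fun n => S (pre ω n)) atTop ≤ r :=
      liminf_le_of_frequently_le'
        ((eventually_atTop.2 ⟨s.length, fun n hn => (hr n hn).le⟩).frequently)
    exact ((hc ω hω).trans hle).not_gt hrc

end GTP

/-- For every situation `s`, the functional `ξ ↦ Ē(ξ | s)` is an outer
probability content on `Ω = X^∞`. -/
theorem upExp_isOPC {X : Type*} [Nonempty X]
    (E : ℕ → (X → EReal) → EReal) (hE : ∀ n, GTP.IsOPC (E n)) (s : List X) :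
    GTP.IsOPC (fun ξ : (ℕ → X) → EReal => GTP.upExp E ξ s) :=
  ⟨fun _ _ h => GTP.upExp_mono h s, fun _ hc ξ => GTP.upExp_const_mul hE hc ξ s,
    fun ξ η => GTP.upExp_upAdd_le hE ξ η s, fun c => GTP.upExp_const hE c s⟩
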